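/- For any γ > 0 and δ ∈ (0,1), with probability at least 1-δ the upper-tail bound ṽ_n(π) - v(π) ≤ log(|Π|/δ)/(2γn) holds simultaneously for all π in the finite policy class Π. -/

import Mathlib

/-!
The proof is a Chernoff bound at the single inverse temperature `2γ`, followed by a union bound over
the policy class.

The key point is that implicit exploration makes the exponential moment of one term harmless:
`2x / (x + 2) ≤ log (1 + x)` gives `m * exp (2γ w / (m + γ)) ≤ m + 2γ w` for `0 ≤ w ≤ 1`
(`mul_exp_ix_le`). With `m = μ(a|x)` and `w = π(a|x) R`, averaging over the reward, summing over
the actions and integrating over the context yields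
`E exp (2γ r̃(π)) ≤ 1 + 2γ v(π) ≤ exp (2γ v(π))` (`lintegral_exp_ixTerm_le`).
By independence `E exp (2γ n (ṽ_n(π) - v(π))) ≤ 1`, and Markov's inequality at level `|Π| / δ`
bounds the failure probability of each policy by `δ / |Π|` (`dataLaw_tail_le`).
-/


open MeasureTheory ProbabilityTheory

/-- A stochastic contextual bandit instance: context distribution `ν`, behavior policy `μb`,
reward kernel `rker` supported on `[0,1]`, and mean reward function `r`. -/
structure CBSetup (𝓧 𝓐 : Type*) [MeasurableSpace 𝓧] [Fintype 𝓐] [MeasurableSpace 𝓐] where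
  /-- the context distribution -/
  ν : Measure 𝓧
  ν_prob : IsProbabilityMeasure ν
  /-- the behavior policy `μ(a|x)` -/
  μb : 𝓧 → 𝓐 → ℝ
  μb_nonneg : ∀ x a, 0 ≤ μb x a
  μb_sum_one : ∀ x, ∑ a, μb x a = 1
  μb_meas : ∀ a, Measurable fun x => μb x a
  /-- the reward kernel `p(·|x,a)` -/
  rker : 𝓧 → 𝓐 → Measure ℝ
  rker_prob : ∀ x a, IsProbabilityMeasure (rker x a)
  rker_supp : ∀ x a, rker x a (Set.Icc (0:ℝ) 1)ᶜ = 0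
  rker_meas : ∀ a, Measurable fun x => rker x a
  /-- the mean reward `r(x,a)` -/
  r : 𝓧 → 𝓐 → ℝ
  r_def : ∀ x a, r x a = ∫ ρ, ρ ∂(rker x a)
  r_meas : ∀ a, Measurable fun x => r x a

variable {𝓧 𝓐 : Type*} [MeasurableSpace 𝓧] [Fintype 𝓐] [MeasurableSpace 𝓐]
  [MeasurableSingletonClass 𝓐]

/-- The law of a single observation `(X, A, R)` with `X ~ ν`, `A ~ μ(·|X)`, `R ~ p(·|X,A)`. -/
noncomputable def obsLaw (S : CBSetup 𝓧 𝓐) : Measure (𝓧 × 𝓐 × ℝ) :=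
  S.ν.bind fun x => Measure.sum fun a =>
    ENNReal.ofReal (S.μb x a) • (S.rker x a).map fun ρ => (x, a, ρ)

/-- The law of the i.i.d. dataset `(X_t, A_t, R_t)_{t=1}^n`. -/
noncomputable def dataLaw (S : CBSetup 𝓧 𝓐) (n : ℕ) : Measure (Fin n → 𝓧 × 𝓐 × ℝ) :=
  Measure.pi fun _ : Fin n => obsLaw S

/-- A (stochastic, measurable) policy: a map from contexts to distributions over actions. -/
def IsPolicy (π : 𝓧 → 𝓐 → ℝ) : Prop :=
  (∀ x a, 0 ≤ π x a) ∧ (∀ x, ∑ a, π x a = 1) ∧ (∀ a, Measurable fun x => π x a)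

/-- The value `v(π) = E[Σ_a π(a|X) r(X,a)]` of a policy. -/
noncomputable def pval (S : CBSetup 𝓧 𝓐) (π : 𝓧 → 𝓐 → ℝ) : ℝ :=
  ∫ x, ∑ a, π x a * S.r x a ∂S.ν

/-- The smoothed coverage ratio `C_γ(π) = E[Σ_a π(a|X) r(X,a)/(μ(a|X)+γ)]`. -/
noncomputable def covγ (S : CBSetup 𝓧 𝓐) (γ : ℝ) (π : 𝓧 → 𝓐 → ℝ) : ℝ :=
  ∫ x, ∑ a, π x a * S.r x a / (S.μb x a + γ) ∂S.ν

/-- The IX reward estimate `r̃(π) = π(A|X) R / (μ(A|X) + γ)` for one observation `ω = (X,A,R)`. -/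
noncomputable def ixTerm (S : CBSetup 𝓧 𝓐) (γ : ℝ) (π : 𝓧 → 𝓐 → ℝ) (ω : 𝓧 × 𝓐 × ℝ) : ℝ :=
  π ω.1 ω.2.1 * ω.2.2 / (S.μb ω.1 ω.2.1 + γ)

/-- The IX value estimator `ṽ_n(π) = (1/n) Σ_t π(A_t|X_t) R_t / (μ(A_t|X_t) + γ)`. -/
noncomputable def ixEst (S : CBSetup 𝓧 𝓐) (γ : ℝ) {n : ℕ} (π : 𝓧 → 𝓐 → ℝ)
    (D : Fin n → 𝓧 × 𝓐 × ℝ) : ℝ :=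
  (∑ t, ixTerm S γ π (D t)) / n

/-- The factor `m` plays the role of the probability `μ(a|x)`; multiplying by it keeps the
inequality valid for actions that the behavior policy never takes. -/
lemma mul_exp_ix_le {m γ w : ℝ} (hm : 0 ≤ m) (hγ : 0 < γ) (hw0 : 0 ≤ w) (hw1 : w ≤ 1) :
    m * Real.exp (2 * γ * (w / (m + γ))) ≤ m + 2 * γ * w := by
  rcases hm.eq_or_lt with rfl | hm
  · simp only [zero_mul, zero_add]; positivity
  · have h1 : 2 * γ * (w / (m + γ)) ≤ Real.log (1 + 2 * γ * w / m) := by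
      refine le_trans ?_ (Real.le_log_one_add_of_nonneg (by positivity))
      have e : 2 * (2 * γ * w / m) / (2 * γ * w / m + 2) = 2 * γ * (w / (m + γ * w)) := by
        field_simp; ring
      rw [e]
      -- `w ≤ 1` is used here: it allows `γ * w` to replace `γ` in the denominator.
      gcongr
      nlinarith
    have h2 := Real.exp_le_exp.mpr h1
    rw [Real.exp_log (by positivity)] at h2
    calc _ ≤ m * (1 + 2 * γ * w / m) := by gcongr
      _ = _ := by field_simp

lemma measurable_action_fun {f : 𝓧 → 𝓐 → ℝ} (hf : ∀ a, Measurable fun x => f x a) :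
    Measurable fun ω : 𝓧 × 𝓐 × ℝ => f ω.1 ω.2.1 :=
  (measurable_from_prod_countable_left (f := fun p : 𝓧 × 𝓐 => f p.1 p.2) hf).comp
    (measurable_fst.prodMk measurable_snd.fst)

lemma measurable_ixTerm (S : CBSetup 𝓧 𝓐) (γ : ℝ) {π : 𝓧 → 𝓐 → ℝ} (hπ : IsPolicy π) :
    Measurable (ixTerm S γ π) :=
  ((measurable_action_fun hπ.2.2).mul measurable_snd.snd).div
    ((measurable_action_fun S.μb_meas).add_const γ)

/-- Measurability of the conditional law of an observation given its context; without it the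
`Measure.bind` in `obsLaw` would be a junk value. -/
lemma measurable_obsKernel (S : CBSetup 𝓧 𝓐) :
    Measurable fun x => Measure.sum fun a =>
      ENNReal.ofReal (S.μb x a) • (S.rker x a).map fun ρ => (x, a, ρ) := by
  refine Measure.measurable_of_measurable_coe _ fun s hs => ?_
  simp only [Measure.sum_apply _ hs, tsum_fintype, Measure.smul_apply, smul_eq_mul]
  refine Finset.measurable_sum _ fun a _ => (S.μb_meas a).ennreal_ofReal.mul ?_
  have hmk : Measurable fun p : 𝓧 × ℝ => (p.1, a, p.2) := by fun_prop
  have hmap : ∀ x, (S.rker x a).map (fun ρ => (x, a, ρ)) s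
      = S.rker x a (Prod.mk x ⁻¹' ((fun p : 𝓧 × ℝ => (p.1, a, p.2)) ⁻¹' s)) := fun x => by
    rw [Measure.map_apply (by fun_prop) hs]; rfl
  simp only [hmap]
  exact Kernel.measurable_kernel_prodMk_left_of_finite (κ := ⟨fun x => S.rker x a, S.rker_meas a⟩)
    (hmk hs) fun x => by have := S.rker_prob x a; exact inferInstanceAs (IsFiniteMeasure (S.rker x a))

lemma lintegral_obsLaw (S : CBSetup 𝓧 𝓐) {f : 𝓧 × 𝓐 × ℝ → ENNReal} (hf : Measurable f) :
    ∫⁻ ω, f ω ∂obsLaw S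
      = ∫⁻ x, ∑ a, ENNReal.ofReal (S.μb x a) * ∫⁻ ρ, f (x, a, ρ) ∂S.rker x a ∂S.ν := by
  rw [obsLaw, Measure.lintegral_bind (measurable_obsKernel S).aemeasurable hf.aemeasurable]
  refine lintegral_congr fun x => ?_
  rw [lintegral_sum_measure, tsum_fintype]
  refine Finset.sum_congr rfl fun a _ => ?_
  rw [lintegral_smul_measure, lintegral_map hf (by fun_prop), smul_eq_mul]

lemma isProbabilityMeasure_obsLaw (S : CBSetup 𝓧 𝓐) : IsProbabilityMeasure (obsLaw S) := by
  have := S.ν_prob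
  have := S.rker_prob
  refine ⟨?_⟩
  have h := lintegral_obsLaw S (measurable_const (a := (1 : ENNReal)))
  simp only [lintegral_const, measure_univ, one_mul, mul_one] at h
  rw [h]
  have hx : ∀ x, ∑ a, ENNReal.ofReal (S.μb x a) = 1 := fun x => by
    rw [← ENNReal.ofReal_sum_of_nonneg fun a _ => S.μb_nonneg x a, S.μb_sum_one]; simp
  simp [hx]

lemma ae_reward_mem (S : CBSetup 𝓧 𝓐) (x : 𝓧) (a : 𝓐) :
    ∀ᵐ ρ ∂S.rker x a, ρ ∈ Set.Icc (0 : ℝ) 1 := S.rker_supp x a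

lemma integrable_reward (S : CBSetup 𝓧 𝓐) (x : 𝓧) (a : 𝓐) :
    Integrable (fun ρ : ℝ => ρ) (S.rker x a) := by
  have := S.rker_prob x a
  refine Integrable.of_bound (by fun_prop) 1 ?_
  filter_upwards [ae_reward_mem S x a] with ρ hρ
  rw [Real.norm_of_nonneg hρ.1]; exact hρ.2

lemma r_mem (S : CBSetup 𝓧 𝓐) (x : 𝓧) (a : 𝓐) : S.r x a ∈ Set.Icc (0 : ℝ) 1 := by
  have := S.rker_prob x a
  rw [S.r_def]
  constructor
  · exact integral_nonneg_of_ae ((ae_reward_mem S x a).mono fun ρ hρ => hρ.1)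
  · have := integral_mono_ae (integrable_reward S x a) (integrable_const 1)
      ((ae_reward_mem S x a).mono fun ρ hρ => hρ.2)
    simpa using this

lemma policy_le_one {π : 𝓧 → 𝓐 → ℝ} (hπ : IsPolicy π) (x : 𝓧) (a : 𝓐) : π x a ≤ 1 := by
  rw [← hπ.2.1 x]
  exact Finset.single_le_sum (fun b _ => hπ.1 x b) (Finset.mem_univ a)

lemma integrable_pval (S : CBSetup 𝓧 𝓐) {π : 𝓧 → 𝓐 → ℝ} (hπ : IsPolicy π) :
    Integrable (fun x => ∑ a, π x a * S.r x a) S.ν := by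
  have := S.ν_prob
  refine integrable_finsetSum _ fun a _ => Integrable.of_bound
    ((hπ.2.2 a).mul (S.r_meas a)).aestronglyMeasurable 1 (ae_of_all _ fun x => ?_)
  rw [Real.norm_of_nonneg (mul_nonneg (hπ.1 x a) (r_mem S x a).1)]
  exact mul_le_one₀ (policy_le_one hπ x a) (r_mem S x a).1 (r_mem S x a).2

/-- The contribution of the action `a` to the exponential moment, conditionally on the
context `x`. -/
lemma lintegral_action_le (S : CBSetup 𝓧 𝓐) {γ : ℝ} (hγ : 0 < γ) {π : 𝓧 → 𝓐 → ℝ}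
    (hπ : IsPolicy π) (x : 𝓧) (a : 𝓐) :
    ENNReal.ofReal (S.μb x a) *
        ∫⁻ ρ, ENNReal.ofReal (Real.exp (2 * γ * ixTerm S γ π (x, a, ρ))) ∂S.rker x a
      ≤ ENNReal.ofReal (S.μb x a + 2 * γ * (π x a * S.r x a)) := by
  have := S.rker_prob x a
  have hμ := S.μb_nonneg x a
  have hp := hπ.1 x a
  have hint : Integrable (fun ρ : ℝ => S.μb x a + 2 * γ * (π x a * ρ)) (S.rker x a) :=
    (integrable_const _).add (((integrable_reward S x a).const_mul _).const_mul _)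
  have hI : ∫ ρ, (S.μb x a + 2 * γ * (π x a * ρ)) ∂S.rker x a
      = S.μb x a + 2 * γ * (π x a * S.r x a) := by
    rw [integral_add (integrable_const _) (((integrable_reward S x a).const_mul _).const_mul _),
      integral_const_mul, integral_const_mul, S.r_def]
    simp
  rw [← hI, ofReal_integral_eq_lintegral_ofReal hint, ← lintegral_const_mul' _ _ (by simp)]
  · refine lintegral_mono_ae ?_
    filter_upwards [ae_reward_mem S x a] with ρ hρ
    rw [← ENNReal.ofReal_mul hμ]
    exact ENNReal.ofReal_le_ofReal (mul_exp_ix_le hμ hγ (mul_nonneg hp hρ.1)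
      (mul_le_one₀ (policy_le_one hπ x a) hρ.1 hρ.2))
  · filter_upwards [ae_reward_mem S x a] with ρ hρ
    have := hρ.1
    simp only [Pi.zero_apply]
    positivity

/-- The exponential moment bound for one observation: `E exp(2γ r̃(π)) ≤ exp(2γ v(π))`. -/
lemma lintegral_exp_ixTerm_le (S : CBSetup 𝓧 𝓐) {γ : ℝ} (hγ : 0 < γ) {π : 𝓧 → 𝓐 → ℝ}
    (hπ : IsPolicy π) :
    ∫⁻ ω, ENNReal.ofReal (Real.exp (2 * γ * ixTerm S γ π ω)) ∂obsLaw S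
      ≤ ENNReal.ofReal (Real.exp (2 * γ * pval S π)) := by
  have := S.ν_prob
  have hnn : ∀ x a, 0 ≤ π x a * S.r x a := fun x a => mul_nonneg (hπ.1 x a) (r_mem S x a).1
  have hint := (integrable_pval S hπ).const_mul (2 * γ)
  rw [lintegral_obsLaw S (((measurable_ixTerm S γ hπ).const_mul _).exp.ennreal_ofReal)]
  calc _ ≤ ∫⁻ x, ENNReal.ofReal (1 + 2 * γ * ∑ a, π x a * S.r x a) ∂S.ν := by
        refine lintegral_mono fun x => (Finset.sum_le_sum fun a _ =>
          lintegral_action_le S hγ hπ x a).trans_eq ?_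
        rw [← ENNReal.ofReal_sum_of_nonneg fun a _ => add_nonneg (S.μb_nonneg x a)
          (mul_nonneg (by positivity) (hnn x a)), Finset.sum_add_distrib, S.μb_sum_one,
          Finset.mul_sum]
    _ = ENNReal.ofReal (∫ x, (1 + 2 * γ * ∑ a, π x a * S.r x a) ∂S.ν) := by
        refine (ofReal_integral_eq_lintegral_ofReal ((integrable_const _).add hint)
          (ae_of_all _ fun x => ?_)).symm
        have := Finset.sum_nonneg fun a (_ : a ∈ Finset.univ) => hnn x a
        exact add_nonneg zero_le_one (mul_nonneg (by positivity) this)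
    _ = ENNReal.ofReal (1 + 2 * γ * pval S π) := by
        rw [integral_add (integrable_const _) hint, integral_const_mul, pval]
        simp
    _ ≤ _ := ENNReal.ofReal_le_ofReal (by linarith [Real.add_one_le_exp (2 * γ * pval S π)])

/-- The Chernoff bound for a fixed policy at confidence level `1 / K`. -/
lemma dataLaw_tail_le (S : CBSetup 𝓧 𝓐) {n : ℕ} (hn : 0 < n) {γ K : ℝ} (hγ : 0 < γ)
    (hK : 0 < K) {π : 𝓧 → 𝓐 → ℝ} (hπ : IsPolicy π) :
    dataLaw S n {D | Real.log K / (2 * γ * n) < ixEst S γ π D - pval S π}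
      ≤ ENNReal.ofReal K⁻¹ := by
  have := isProbabilityMeasure_obsLaw S
  set Y : 𝓧 × 𝓐 × ℝ → ENNReal :=
    fun ω => ENNReal.ofReal (Real.exp (2 * γ * (ixTerm S γ π ω - pval S π))) with hY
  have hYm : Measurable Y :=
    (((measurable_ixTerm S γ hπ).sub_const _).const_mul _).exp.ennreal_ofReal
  have hY1 : ∫⁻ ω, Y ω ∂obsLaw S ≤ 1 := by
    have e : ∀ ω, Y ω = ENNReal.ofReal (Real.exp (2 * γ * ixTerm S γ π ω)) *
        ENNReal.ofReal (Real.exp (-(2 * γ * pval S π))) := fun ω => by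
      rw [hY, ← ENNReal.ofReal_mul (Real.exp_pos _).le, ← Real.exp_add]
      ring_nf
    simp only [e]
    rw [lintegral_mul_const' _ _ (by simp)]
    calc _ ≤ ENNReal.ofReal (Real.exp (2 * γ * pval S π)) *
          ENNReal.ofReal (Real.exp (-(2 * γ * pval S π))) := by
          gcongr; exact lintegral_exp_ixTerm_le S hγ hπ
      _ = 1 := by rw [← ENNReal.ofReal_mul (Real.exp_pos _).le, ← Real.exp_add]; simp
  have hprod : ∫⁻ D, ∏ t, Y (D t) ∂dataLaw S n ≤ 1 := by
    rw [dataLaw, lintegral_prod_eq_prod_lintegral_of_indepFun Finset.univ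
      (fun t (D : Fin n → 𝓧 × 𝓐 × ℝ) => Y (D t))
      (iIndepFun_pi fun _ => hYm.aemeasurable) fun t => hYm.comp (measurable_pi_apply t)]
    refine Finset.prod_le_one' fun t _ => ?_
    rw [(measurePreserving_eval (fun _ : Fin n => obsLaw S) t).lintegral_comp hYm]
    exact hY1
  have hm : Measurable fun D : Fin n → 𝓧 × 𝓐 × ℝ => ∏ t, Y (D t) :=
    Finset.measurable_prod _ fun t _ => hYm.comp (measurable_pi_apply t)
  have hn' : (0 : ℝ) < n := by exact_mod_cast hn
  have hsub : {D | Real.log K / (2 * γ * n) < ixEst S γ π D - pval S π}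
      ⊆ {D : Fin n → 𝓧 × 𝓐 × ℝ | ENNReal.ofReal K ≤ ∏ t, Y (D t)} := fun D hD => by
    simp only [Set.mem_ofPred_eq] at hD ⊢
    rw [hY, ← ENNReal.ofReal_prod_of_nonneg fun t _ => (Real.exp_pos _).le, ← Real.exp_sum]
    refine ENNReal.ofReal_le_ofReal ((Real.log_le_iff_le_exp hK).mp ?_)
    rw [div_lt_iff₀ (by positivity)] at hD
    refine hD.le.trans_eq ?_
    rw [← Finset.mul_sum, Finset.sum_sub_distrib, ixEst]
    simp only [Finset.sum_const, Finset.card_univ, Fintype.card_fin, nsmul_eq_mul]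
    field_simp
  calc _ ≤ _ := measure_mono hsub
    _ ≤ (∫⁻ D, ∏ t, Y (D t) ∂dataLaw S n) / ENNReal.ofReal K :=
        meas_ge_le_lintegral_div hm.aemeasurable (by simpa using hK) (by simp)
    _ ≤ 1 / ENNReal.ofReal K := by gcongr
    _ = _ := by rw [one_div, ENNReal.ofReal_inv_of_pos hK]

/-- Lemma 1: with probability at least `1-δ`, simultaneously for all
`π ∈ Pol`, `ṽ_n(π) - v(π) ≤ log(|Π|/δ)/(2γn)`. -/
theorem ix_upper_tail
    (S : CBSetup 𝓧 𝓐) {n : ℕ} (hn : 0 < n) (γ δ : ℝ) (hγ : 0 < γ)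
    (hδ0 : 0 < δ) (hδ1 : δ < 1)
    (Pol : Finset (𝓧 → 𝓐 → ℝ)) (hpol : ∀ π ∈ Pol, IsPolicy π) :
    ENNReal.ofReal (1 - δ) ≤
      dataLaw S n {D : Fin n → 𝓧 × 𝓐 × ℝ | ∀ π ∈ Pol,
        ixEst S γ π D - pval S π ≤ Real.log ((Pol.card : ℝ) / δ) / (2 * γ * n)} := by
  have := isProbabilityMeasure_obsLaw S
  have : IsProbabilityMeasure (dataLaw S n) := by unfold dataLaw; infer_instance
  set G := {D : Fin n → 𝓧 × 𝓐 × ℝ | ∀ π ∈ Pol,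
    ixEst S γ π D - pval S π ≤ Real.log ((Pol.card : ℝ) / δ) / (2 * γ * n)} with hG
  have hbad : dataLaw S n Gᶜ ≤ ENNReal.ofReal δ := by
    rcases Pol.eq_empty_or_nonempty with rfl | hne
    · simp [hG]
    have hN : (0 : ℝ) < Pol.card := by exact_mod_cast hne.card_pos
    have hsub : Gᶜ ⊆ ⋃ π ∈ Pol, {D : Fin n → 𝓧 × 𝓐 × ℝ |
        Real.log ((Pol.card : ℝ) / δ) / (2 * γ * n) < ixEst S γ π D - pval S π} := fun D hD => by
      simpa [hG, lt_sub_iff_add_lt] using hD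
    calc _ ≤ _ := measure_mono hsub
      _ ≤ _ := measure_biUnion_finset_le _ _
      _ ≤ ∑ π ∈ Pol, ENNReal.ofReal ((Pol.card : ℝ) / δ)⁻¹ :=
          Finset.sum_le_sum fun π hπ => dataLaw_tail_le S hn hγ (by positivity) (hpol π hπ)
      _ = ENNReal.ofReal δ := by
          rw [Finset.sum_const, ← ENNReal.ofReal_nsmul]
          congr 1
          rw [nsmul_eq_mul]
          field_simp
  -- Subadditivity over `G ∪ Gᶜ` suffices, so no measurability of `G` is required.
  have hone : 1 ≤ dataLaw S n G + dataLaw S n Gᶜ := by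
    rw [← measure_univ (μ := dataLaw S n), ← Set.union_compl_self G]
    exact measure_union_le _ _
  rw [ENNReal.ofReal_sub _ hδ0.le, ENNReal.ofReal_one, tsub_le_iff_right]
  exact hone.trans (by gcongr)
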